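/- arXiv:1007.0646 — 5 statements merged into one kernel-verified Lean document; each statement's English description precedes it below -/
import Mathlib

section
/- For every partition λ = (λ_1 ≥ … ≥ λ_{n−1} ≥ 0), the number of semistandard PBW-tableaux of shape λ equals the number of classical semistandard Young tableaux of shape λ with entries in {1,…,n} (this common number is the dimension of the irreducible sl_n(ℂ)-module with highest weight λ). -/
open scoped BigOperators

/-- `lam` is the shape of a partition with at most `n-1` rows (rows indexed `1,…,n-1`). -/
def IsShape (n : ℕ) (lam : ℕ → ℕ) : Prop :=
  (∀ i, lam (i + 1) ≤ lam i) ∧ (∀ i, n ≤ i → lam i = 0)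

/-- `(i,j)` is a box of the Young diagram of `lam`. -/
def IsBox (lam : ℕ → ℕ) (i j : ℕ) : Prop :=
  1 ≤ i ∧ 1 ≤ j ∧ j ≤ lam i

/-- The length `μ_j` of the `j`-th column of the Young diagram of `lam`. -/
def colLen (n : ℕ) (lam : ℕ → ℕ) (j : ℕ) : ℕ :=
  ((Finset.Icc 1 (n - 1)).filter (fun i => j ≤ lam i)).card

/-- A PBW-tableau of shape `lam` with entries in `{1,…,n}`: entries `≤ μ_j` equal their row
index, and in each column the entries different from the row index strictly decrease
downwards. -/
def IsPBWTableau (n : ℕ) (lam : ℕ → ℕ) (T : ℕ → ℕ → ℕ) : Prop :=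
  (∀ i j, IsBox lam i j → 1 ≤ T i j ∧ T i j ≤ n) ∧
  (∀ i j, IsBox lam i j → T i j ≤ colLen n lam j → T i j = i) ∧
  (∀ i₁ i₂ j, IsBox lam i₁ j → IsBox lam i₂ j → i₁ < i₂ → T i₁ j ≠ i₁ →
    T i₂ j < T i₁ j)

/-- A semistandard PBW-tableau of shape `lam`. -/
def IsSSPBWTableau (n : ℕ) (lam : ℕ → ℕ) (T : ℕ → ℕ → ℕ) : Prop :=
  IsPBWTableau n lam T ∧
  ∀ i j, IsBox lam i j → 2 ≤ j →
    ∃ i₁, i ≤ i₁ ∧ IsBox lam i₁ (j - 1) ∧ T i j ≤ T i₁ (j - 1)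

/-- The set of semistandard PBW-tableaux of shape `lam` (normalized to be `0` off the
diagram). -/
def SSPBWTableaux (n : ℕ) (lam : ℕ → ℕ) : Set (ℕ → ℕ → ℕ) :=
  {T | IsSSPBWTableau n lam T ∧ ∀ i j, ¬ IsBox lam i j → T i j = 0}

/-- The set of classical semistandard Young tableaux of shape `lam` with entries in
`{1,…,n}`: weakly increasing along rows, strictly increasing down columns (normalized to
be `0` off the diagram). -/
def SSYT (n : ℕ) (lam : ℕ → ℕ) : Set (ℕ → ℕ → ℕ) :=
  {T | (∀ i j, IsBox lam i j → 1 ≤ T i j ∧ T i j ≤ n) ∧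
       (∀ i j, IsBox lam i j → IsBox lam i (j + 1) → T i j ≤ T i (j + 1)) ∧
       (∀ i j, IsBox lam i j → IsBox lam (i + 1) j → T i j < T (i + 1) j) ∧
       (∀ i j, ¬ IsBox lam i j → T i j = 0)}

/-!
Both kinds of tableaux are determined by one array of column profiles. The profile of a PBW column
`t` of height `c` is `m i = max {t k | i ≤ k ≤ c}`, an antitone sequence with values in `[c, n]`; it
determines `t`, since `t i = m i` where `m` drops strictly after row `i` and `t i = i` elsewhere.
The profile of a strictly increasing column `s` is `m i = n + i - s i`. On either side the condition
relating neighbouring columns says precisely that the profiles weakly decrease from left to right.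
-/

section Columns

/-- A column of height `c` of a PBW-tableau with entries in `{1,…,n}`. Here and below a column of
height `c` is a function on `ℕ` that vanishes off the rows `1,…,c`. -/
structure IsPBWColumn (n c : ℕ) (t : ℕ → ℕ) : Prop where
  eq_zero : ∀ i ∉ Set.Icc 1 c, t i = 0
  mapsTo : Set.MapsTo t (Set.Icc 1 c) (Set.Icc 1 n)
  eq_of_le : ∀ i ∈ Set.Icc 1 c, t i ≤ c → t i = i
  lt_of_ne : ∀ i ∈ Set.Icc 1 c, ∀ k ∈ Set.Icc 1 c, i < k → t i ≠ i → t k < t i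

/-- A strictly increasing column of height `c` with entries in `{1,…,n}`, as in classical
semistandard tableaux. -/
structure IsStrictColumn (n c : ℕ) (s : ℕ → ℕ) : Prop where
  eq_zero : ∀ i ∉ Set.Icc 1 c, s i = 0
  mapsTo : Set.MapsTo s (Set.Icc 1 c) (Set.Icc 1 n)
  strictMonoOn : StrictMonoOn s (Set.Icc 1 c)

/-- A column profile of height `c`: a weakly decreasing column with entries in `{c,…,n}`. Profiles
are the common encoding of PBW columns and strictly increasing columns. -/
structure IsProfile (n c : ℕ) (m : ℕ → ℕ) : Prop where
  eq_zero : ∀ i ∉ Set.Icc 1 c, m i = 0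
  mapsTo : Set.MapsTo m (Set.Icc 1 c) (Set.Icc c n)
  antitoneOn : AntitoneOn m (Set.Icc 1 c)

/-- The condition on a column `t` and its right neighbour `t'` in a semistandard PBW-tableau. The
row `k` need not be bounded by the height of `t`, because the entries of `t` below it are `0`. -/
def PBWDominates (t t' : ℕ → ℕ) : Prop :=
  ∀ i, ∃ k, i ≤ k ∧ t' i ≤ t k

/-- The condition on a column `s` and its right neighbour `s'` in a classical semistandard tableau:
rows weakly increase as long as `s'` has a box, that is, a nonzero entry. -/
def RowwiseLE (s s' : ℕ → ℕ) : Prop :=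
  ∀ i, s' i ≠ 0 → s i ≤ s' i

/-- The profile of a PBW column `t` of height `c`: the maximum of the entries weakly below each
row. -/
noncomputable def tailSup (c : ℕ) (t : ℕ → ℕ) : ℕ → ℕ :=
  (Set.Icc 1 c).indicator fun i => (Finset.Icc i c).sup t

/-- The PBW column with profile `m`. In the last row `m (c + 1) = 0`, so the entry there is
`m c`. -/
noncomputable def pbwOfProfile (c : ℕ) (m : ℕ → ℕ) : ℕ → ℕ :=
  (Set.Icc 1 c).indicator fun i => if m (i + 1) < m i then m i else i

/-- The reflection `x i ↦ n + i - x i` of a column of height `c`. It exchanges strictly increasing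
columns and profiles, for which the subtraction is never truncated. -/
noncomputable def reflect (n c : ℕ) (x : ℕ → ℕ) : ℕ → ℕ :=
  (Set.Icc 1 c).indicator fun i => n + i - x i

variable {n c c' i k : ℕ} {t t' s s' m m' x : ℕ → ℕ}

lemma tailSup_of_mem (hi : i ∈ Set.Icc 1 c) : tailSup c t i = (Finset.Icc i c).sup t :=
  Set.indicator_of_mem hi _

lemma tailSup_of_notMem (hi : i ∉ Set.Icc 1 c) : tailSup c t i = 0 :=
  Set.indicator_of_notMem hi _

lemma pbwOfProfile_of_mem (hi : i ∈ Set.Icc 1 c) :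
    pbwOfProfile c m i = if m (i + 1) < m i then m i else i :=
  Set.indicator_of_mem hi _

lemma pbwOfProfile_of_notMem (hi : i ∉ Set.Icc 1 c) : pbwOfProfile c m i = 0 :=
  Set.indicator_of_notMem hi _

lemma reflect_of_mem (hi : i ∈ Set.Icc 1 c) : reflect n c x i = n + i - x i :=
  Set.indicator_of_mem hi _

lemma reflect_of_notMem (hi : i ∉ Set.Icc 1 c) : reflect n c x i = 0 :=
  Set.indicator_of_notMem hi _

lemma reflect_reflect (hzero : ∀ i ∉ Set.Icc 1 c, x i = 0) (hle : ∀ i ∈ Set.Icc 1 c, x i ≤ n) :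
    reflect n c (reflect n c x) = x := by
  funext i
  by_cases hi : i ∈ Set.Icc 1 c
  · have := hle i hi
    rw [reflect_of_mem hi, reflect_of_mem hi]
    omega
  · rw [reflect_of_notMem hi, hzero i hi]

lemma le_tailSup (hi : 1 ≤ i) (hik : i ≤ k) (hkc : k ≤ c) : t k ≤ tailSup c t i := by
  rw [tailSup_of_mem ⟨hi, hik.trans hkc⟩]
  exact Finset.le_sup (f := t) (Finset.mem_Icc.2 ⟨hik, hkc⟩)

lemma exists_tailSup_eq (hi : i ∈ Set.Icc 1 c) : ∃ k ∈ Set.Icc i c, tailSup c t i = t k := by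
  obtain ⟨k, hk, hsup⟩ :=
    Finset.exists_mem_eq_sup (Finset.Icc i c) (Finset.nonempty_Icc.2 hi.2) t
  exact ⟨k, Finset.mem_Icc.1 hk, (tailSup_of_mem hi).trans hsup⟩

lemma tailSup_eq_max_tailSup_succ (hi : i ∈ Set.Icc 1 c) :
    tailSup c t i = max (t i) (tailSup c t (i + 1)) := by
  have hsucc : tailSup c t (i + 1) = (Finset.Icc (i + 1) c).sup t := by
    by_cases hic : i + 1 ≤ c
    · exact tailSup_of_mem ⟨by omega, hic⟩
    · rw [tailSup_of_notMem (fun h => hic h.2), Finset.Icc_eq_empty hic, Finset.sup_empty]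
      rfl
  rw [hsucc, tailSup_of_mem hi, ← Finset.insert_Icc_add_one_left_eq_Icc hi.2, Finset.sup_insert]

namespace IsPBWColumn

lemma le_apply (ht : IsPBWColumn n c t) (hi : i ∈ Set.Icc 1 c) : i ≤ t i := by
  by_cases hle : t i ≤ c
  · exact (ht.eq_of_le i hi hle).ge
  · exact hi.2.trans (not_le.1 hle).le

lemma isProfile_tailSup (ht : IsPBWColumn n c t) : IsProfile n c (tailSup c t) where
  eq_zero _ hi := tailSup_of_notMem hi
  mapsTo i hi := by
    obtain ⟨k, hk, hsup⟩ := exists_tailSup_eq (t := t) hi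
    have hc : c ∈ Set.Icc 1 c := ⟨hi.1.trans hi.2, le_rfl⟩
    exact ⟨(ht.le_apply hc).trans (le_tailSup hi.1 hi.2 le_rfl),
      hsup ▸ (ht.mapsTo ⟨hi.1.trans hk.1, hk.2⟩).2⟩
  antitoneOn i hi k hk hik := by
    obtain ⟨l, hl, hsup⟩ := exists_tailSup_eq (t := t) hk
    exact hsup ▸ le_tailSup hi.1 (hik.trans hl.1) hl.2

lemma tailSup_succ_lt (ht : IsPBWColumn n c t) (hi : i ∈ Set.Icc 1 c) (hne : t i ≠ i) :
    tailSup c t (i + 1) < t i := by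
  by_cases hic : i + 1 ∈ Set.Icc 1 c
  · obtain ⟨k, hk, hsup⟩ := exists_tailSup_eq (t := t) hic
    exact hsup ▸ ht.lt_of_ne i hi k ⟨hic.1.trans hk.1, hk.2⟩ hk.1 hne
  · rw [tailSup_of_notMem hic]
    exact (ht.mapsTo hi).1

lemma pbwOfProfile_tailSup (ht : IsPBWColumn n c t) : pbwOfProfile c (tailSup c t) = t := by
  funext i
  by_cases hi : i ∈ Set.Icc 1 c
  · have hmax := tailSup_eq_max_tailSup_succ (t := t) hi
    rw [pbwOfProfile_of_mem hi]
    split_ifs with hdrop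
    · exact hmax.trans (max_eq_left_of_lt (by omega))
    · by_contra hne
      have := ht.tailSup_succ_lt hi (Ne.symm hne)
      omega
  · rw [pbwOfProfile_of_notMem hi, ht.eq_zero i hi]

lemma pbwDominates_iff (ht : IsPBWColumn n c t) (ht' : IsPBWColumn n c' t') :
    PBWDominates t t' ↔ tailSup c' t' ≤ tailSup c t := by
  constructor
  · intro hdom i
    by_cases hi : i ∈ Set.Icc 1 c'
    · obtain ⟨k, hk, hsup⟩ := exists_tailSup_eq (t := t') hi
      obtain ⟨l, hkl, hle⟩ := hdom k
      have hpos := (ht'.mapsTo ⟨hi.1.trans hk.1, hk.2⟩).1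
      have hl : l ∈ Set.Icc 1 c := by
        by_contra hl
        have := ht.eq_zero l hl
        omega
      exact hsup ▸ hle.trans (le_tailSup hi.1 (hk.1.trans hkl) hl.2)
    · exact tailSup_of_notMem hi ▸ Nat.zero_le _
  · intro hle i
    by_cases hi' : i ∈ Set.Icc 1 c'
    · have hbound : t' i ≤ tailSup c t i := (le_tailSup hi'.1 le_rfl hi'.2).trans (hle i)
      by_cases hi : i ∈ Set.Icc 1 c
      · obtain ⟨k, hk, hsup⟩ := exists_tailSup_eq (t := t) hi
        exact ⟨k, hk.1, hsup ▸ hbound⟩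
      · rw [tailSup_of_notMem hi] at hbound
        exact ⟨i, le_rfl, hbound.trans (Nat.zero_le _)⟩
    · exact ⟨i, le_rfl, ht'.eq_zero i hi' ▸ Nat.zero_le _⟩

end IsPBWColumn

namespace IsProfile

lemma apply_succ_le (hm : IsProfile n c m) (hi : i ∈ Set.Icc 1 c) : m (i + 1) ≤ m i := by
  by_cases hic : i + 1 ∈ Set.Icc 1 c
  · exact hm.antitoneOn hi hic i.le_succ
  · exact hm.eq_zero _ hic ▸ Nat.zero_le _

lemma pbwOfProfile_le (hm : IsProfile n c m) (hi : i ∈ Set.Icc 1 c) :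
    pbwOfProfile c m i ≤ m i := by
  rw [pbwOfProfile_of_mem hi]
  split_ifs
  · exact le_rfl
  · exact hi.2.trans (hm.mapsTo hi).1

lemma isPBWColumn_pbwOfProfile (hm : IsProfile n c m) :
    IsPBWColumn n c (pbwOfProfile c m) where
  eq_zero _ hi := pbwOfProfile_of_notMem hi
  mapsTo i hi := by
    refine ⟨?_, (hm.pbwOfProfile_le hi).trans (hm.mapsTo hi).2⟩
    rw [pbwOfProfile_of_mem hi]
    split_ifs with hdrop
    · exact Nat.one_le_of_lt hdrop
    · exact hi.1
  eq_of_le i hi hle := by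
    rw [pbwOfProfile_of_mem hi] at hle ⊢
    split_ifs at hle ⊢ with hdrop
    · have hlast : i + 1 ∉ Set.Icc 1 c := fun hic =>
        ((hm.mapsTo hic).1.trans_lt hdrop).not_ge hle
      have hic : i = c := by
        have := hi.2
        simp only [Set.mem_Icc] at hlast
        omega
      have := (hm.mapsTo hi).1
      omega
    · rfl
  lt_of_ne i hi k hk hik hne := by
    rw [pbwOfProfile_of_mem hi] at hne ⊢
    split_ifs at hne ⊢ with hdrop
    · have hic : i + 1 ∈ Set.Icc 1 c := ⟨i.succ_pos, hik.trans_le hk.2⟩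
      calc pbwOfProfile c m k ≤ m k := hm.pbwOfProfile_le hk
        _ ≤ m (i + 1) := hm.antitoneOn hic hk hik
        _ < m i := hdrop
    · exact absurd rfl hne

lemma max_pbwOfProfile_apply_succ (hm : IsProfile n c m) (hi : i ∈ Set.Icc 1 c) :
    max (pbwOfProfile c m i) (m (i + 1)) = m i := by
  refine le_antisymm (max_le (hm.pbwOfProfile_le hi) (hm.apply_succ_le hi)) ?_
  rw [pbwOfProfile_of_mem hi]
  split_ifs with hdrop
  · exact le_max_left _ _
  · exact le_max_of_le_right (not_lt.1 hdrop)

lemma tailSup_pbwOfProfile (hm : IsProfile n c m) : tailSup c (pbwOfProfile c m) = m := by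
  have hzero : ∀ i ∉ Set.Icc 1 c, tailSup c (pbwOfProfile c m) i = m i := fun i hi => by
    rw [tailSup_of_notMem hi, hm.eq_zero i hi]
  funext i
  obtain hic | hic := Nat.le_total (c + 1) i
  · exact hzero i fun hi => by have := hi.2; omega
  · induction hic using Nat.decreasingInduction with
    | self => exact hzero _ fun hi => by have := hi.2; omega
    | of_succ i _ ih =>
      by_cases hi : i ∈ Set.Icc 1 c
      · rw [tailSup_eq_max_tailSup_succ hi, ih, hm.max_pbwOfProfile_apply_succ hi]
      · exact hzero i hi

lemma isStrictColumn_reflect (hm : IsProfile n c m) : IsStrictColumn n c (reflect n c m) where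
  eq_zero _ hi := reflect_of_notMem hi
  mapsTo i hi := by
    obtain ⟨hge, hle⟩ := hm.mapsTo hi
    obtain ⟨hi1, hic⟩ := hi
    rw [reflect_of_mem ⟨hi1, hic⟩]
    constructor <;> omega
  strictMonoOn i hi k hk hik := by
    have hanti := hm.antitoneOn hi hk hik.le
    have hle := (hm.mapsTo hi).2
    rw [reflect_of_mem hi, reflect_of_mem hk]
    omega

end IsProfile

lemma add_le_add_of_strictMonoOn {f : ℕ → ℕ} {S : Set ℕ} [S.OrdConnected]
    (hf : StrictMonoOn f S) (hi : i ∈ S) (hk : k ∈ S) (hik : i ≤ k) : f i + k ≤ f k + i := by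
  induction k, hik using Nat.le_induction with
  | base => exact le_rfl
  | succ k hik ih =>
    have hkS : k ∈ S := Set.OrdConnected.out ‹_› hi hk ⟨hik, k.le_succ⟩
    have := hf hkS hk k.lt_succ_self
    have := ih hkS
    omega

namespace IsStrictColumn

lemma isProfile_reflect (hs : IsStrictColumn n c s) : IsProfile n c (reflect n c s) where
  eq_zero _ hi := reflect_of_notMem hi
  mapsTo i hi := by
    have hc : 1 ≤ c := hi.1.trans hi.2
    have hfirst := add_le_add_of_strictMonoOn hs.strictMonoOn ⟨le_rfl, hc⟩ hi hi.1
    have hlast := add_le_add_of_strictMonoOn hs.strictMonoOn hi ⟨hc, le_rfl⟩ hi.2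
    have hone : 1 ≤ s 1 := (hs.mapsTo ⟨le_rfl, hc⟩).1
    have hn : s c ≤ n := (hs.mapsTo ⟨hc, le_rfl⟩).2
    rw [reflect_of_mem hi]
    constructor <;> omega
  antitoneOn i hi k hk hik := by
    have := add_le_add_of_strictMonoOn hs.strictMonoOn hi hk hik
    rw [reflect_of_mem hi, reflect_of_mem hk]
    omega

lemma rowwiseLE_iff (hs : IsStrictColumn n c s) (hs' : IsStrictColumn n c' s') (hc : c' ≤ c) :
    RowwiseLE s s' ↔ reflect n c' s' ≤ reflect n c s := by
  have hmem {i : ℕ} (hi : i ∈ Set.Icc 1 c') : i ∈ Set.Icc 1 c := ⟨hi.1, hi.2.trans hc⟩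
  constructor
  · intro hrow i
    by_cases hi : i ∈ Set.Icc 1 c'
    · rw [reflect_of_mem hi, reflect_of_mem (hmem hi)]
      exact Nat.sub_le_sub_left (hrow i (Nat.one_le_iff_ne_zero.1 (hs'.mapsTo hi).1)) _
    · exact reflect_of_notMem hi ▸ Nat.zero_le _
  · intro hle i hne
    have hi : i ∈ Set.Icc 1 c' := by
      by_contra hi
      exact hne (hs'.eq_zero i hi)
    have hlei : reflect n c' s' i ≤ reflect n c s i := hle i
    have := (hs.mapsTo (hmem hi)).2
    rw [reflect_of_mem hi, reflect_of_mem (hmem hi)] at hlei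
    omega

end IsStrictColumn

lemma bijOn_tailSup (n c : ℕ) :
    Set.BijOn (tailSup c) {t | IsPBWColumn n c t} {m | IsProfile n c m} :=
  Set.InvOn.bijOn (f' := pbwOfProfile c)
    ⟨fun _ ht => ht.pbwOfProfile_tailSup, fun _ hm => hm.tailSup_pbwOfProfile⟩
    (fun _ ht => ht.isProfile_tailSup) (fun _ hm => hm.isPBWColumn_pbwOfProfile)

lemma bijOn_reflect (n c : ℕ) :
    Set.BijOn (reflect n c) {s | IsStrictColumn n c s} {m | IsProfile n c m} :=
  Set.InvOn.bijOn (f' := reflect n c)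
    ⟨fun _ hs => reflect_reflect hs.eq_zero fun _ hi => (hs.mapsTo hi).2,
      fun _ hm => reflect_reflect hm.eq_zero fun _ hi => (hm.mapsTo hi).2⟩
    (fun _ hs => hs.isProfile_reflect) (fun _ hm => hm.isStrictColumn_reflect)

end Columns

section Arrays

/-- The arrays, with columns indexed from `1` and column `j` of height `h j`, all of whose columns
satisfy `A` and all of whose pairs of neighbouring columns satisfy `R`. Column `0` is included with
its height `h 0`, but is no neighbour of column `1`. -/
def columnwise (h : ℕ → ℕ) (A : ℕ → (ℕ → ℕ) → Prop) (R : (ℕ → ℕ) → (ℕ → ℕ) → Prop) :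
    Set (ℕ → ℕ → ℕ) :=
  {T | (∀ j, A (h j) (T · j)) ∧ ∀ j, 1 ≤ j → R (T · j) (T · (j + 1))}

/-- Applies to each column of an array the map `f` for the height of that column. -/
def mapColumns (h : ℕ → ℕ) (f : ℕ → (ℕ → ℕ) → ℕ → ℕ) (T : ℕ → ℕ → ℕ) : ℕ → ℕ → ℕ :=
  fun i j => f (h j) (T · j) i

variable {h : ℕ → ℕ} {A B : ℕ → (ℕ → ℕ) → Prop} {R Q : (ℕ → ℕ) → (ℕ → ℕ) → Prop}
  {f : ℕ → (ℕ → ℕ) → ℕ → ℕ}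

lemma bijOn_mapColumns (hh : AntitoneOn h (Set.Ici 1))
    (hf : ∀ c, Set.BijOn (f c) {t | A c t} {t | B c t})
    (hR : ∀ {c c' t t'}, c' ≤ c → A c t → A c' t' → (R t t' ↔ Q (f c t) (f c' t'))) :
    Set.BijOn (mapColumns h f) (columnwise h A R) (columnwise h B Q) := by
  have hh_succ {j : ℕ} (hj : 1 ≤ j) : h (j + 1) ≤ h j :=
    hh hj (Set.mem_Ici.2 (by omega)) j.le_succ
  refine ⟨fun T hT => ?_, fun T hT T' hT' heq => ?_, fun S hS => ?_⟩
  · exact ⟨fun j => (hf (h j)).mapsTo (hT.1 j),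
      fun j hj => (hR (hh_succ hj) (hT.1 j) (hT.1 (j + 1))).1 (hT.2 j hj)⟩
  · have hcol (j : ℕ) : (T · j) = (T' · j) :=
      (hf (h j)).injOn (hT.1 j) (hT'.1 j) (funext fun i => congrFun₂ heq i j)
    exact funext₂ fun i j => congrFun (hcol j) i
  · choose t ht hft using fun j => (hf (h j)).surjOn (hS.1 j)
    refine ⟨fun i j => t j i, ⟨ht, fun j hj => ?_⟩, funext₂ fun i j => congrFun (hft j) i⟩
    rw [hR (hh_succ hj) (ht j) (ht (j + 1)), hft, hft]
    exact hS.2 j hj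

end Arrays

section Tableaux

/-- The height of column `j` of the diagram of `lam`. It differs from `colLen` only in giving column
`0`, which has no boxes, height `0`. -/
def colHeight (n : ℕ) (lam : ℕ → ℕ) (j : ℕ) : ℕ :=
  if j = 0 then 0 else colLen n lam j

variable {n i j : ℕ} {lam : ℕ → ℕ}

lemma colHeight_of_one_le (hj : 1 ≤ j) : colHeight n lam j = colLen n lam j :=
  if_neg (Nat.one_le_iff_ne_zero.1 hj)

lemma antitoneOn_colHeight : AntitoneOn (colHeight n lam) (Set.Ici 1) := by
  intro j hj k hk hjk
  rw [colHeight_of_one_le hj, colHeight_of_one_le hk]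
  exact Finset.card_le_card (Finset.monotone_filter_right _ fun _ _ hle => hjk.trans hle)

lemma le_colLen_iff (hlam : IsShape n lam) (hi : 1 ≤ i) (hj : 1 ≤ j) :
    i ≤ colLen n lam j ↔ j ≤ lam i := by
  have hanti : Antitone lam := antitone_nat_of_succ_le hlam.1
  constructor
  · intro hle
    by_contra hlt
    have hsub : (Finset.Icc 1 (n - 1)).filter (j ≤ lam ·) ⊆ Finset.Icc 1 (i - 1) := by
      intro k hk
      simp only [Finset.mem_filter, Finset.mem_Icc] at hk ⊢
      by_contra hki
      have := hanti (show i ≤ k by omega)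
      omega
    have hcard := Finset.card_le_card hsub
    rw [Nat.card_Icc] at hcard
    unfold colLen at hle
    omega
  · intro hle
    have hin : i < n := by
      by_contra hni
      have := hlam.2 i (not_lt.1 hni)
      omega
    have hsub : Finset.Icc 1 i ⊆ (Finset.Icc 1 (n - 1)).filter (j ≤ lam ·) := by
      intro k hk
      simp only [Finset.mem_filter, Finset.mem_Icc] at hk ⊢
      have := hanti hk.2
      omega
    simpa only [Nat.card_Icc, Nat.add_sub_cancel, colLen] using Finset.card_le_card hsub

lemma isBox_iff_mem_Icc_colHeight (hlam : IsShape n lam) :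
    IsBox lam i j ↔ i ∈ Set.Icc 1 (colHeight n lam j) := by
  unfold IsBox
  obtain rfl | hj := Nat.eq_zero_or_pos j
  · simp only [colHeight, if_true, Set.mem_Icc]
    omega
  · rw [colHeight_of_one_le hj, Set.mem_Icc]
    constructor
    · exact fun ⟨hi, _, hle⟩ => ⟨hi, (le_colLen_iff hlam hi hj).2 hle⟩
    · exact fun ⟨hi, hle⟩ => ⟨hi, hj, (le_colLen_iff hlam hi hj).1 hle⟩

theorem sspbwTableaux_eq_columnwise (hlam : IsShape n lam) :
    SSPBWTableaux n lam = columnwise (colHeight n lam) (IsPBWColumn n) PBWDominates := by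
  have hbox {i j : ℕ} := isBox_iff_mem_Icc_colHeight (i := i) (j := j) hlam
  have hheight {i j : ℕ} (hij : IsBox lam i j) := colHeight_of_one_le (n := n) (lam := lam) hij.2.1
  ext T
  constructor
  · rintro ⟨⟨⟨hrange, hself, hlt⟩, hdom⟩, hzero⟩
    refine ⟨fun j => ⟨fun i hi => hzero i j (hbox.not.2 hi), fun i hi => hrange i j (hbox.2 hi),
      fun i hi hle => hself i j (hbox.2 hi) (hheight (hbox.2 hi) ▸ hle),
      fun i hi k hk => hlt i k j (hbox.2 hi) (hbox.2 hk)⟩, fun j hj i => ?_⟩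
    by_cases hij : IsBox lam i (j + 1)
    · obtain ⟨k, hik, -, hle⟩ := hdom i (j + 1) hij (by omega)
      exact ⟨k, hik, hle⟩
    · exact ⟨i, le_rfl, (hzero i (j + 1) hij).trans_le (Nat.zero_le _)⟩
  · rintro ⟨hcol, hdom⟩
    have hzero (i j : ℕ) (hij : ¬ IsBox lam i j) : T i j = 0 :=
      (hcol j).eq_zero i (hbox.not.1 hij)
    refine ⟨⟨⟨fun i j hij => (hcol j).mapsTo (hbox.1 hij),
      fun i j hij hle => (hcol j).eq_of_le i (hbox.1 hij) (hheight hij ▸ hle),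
      fun i k j hij hkj => (hcol j).lt_of_ne i (hbox.1 hij) k (hbox.1 hkj)⟩, ?_⟩, hzero⟩
    intro i j hij hj
    obtain ⟨j, rfl⟩ := Nat.exists_eq_add_of_le' hj
    obtain ⟨k, hik, hle⟩ := hdom (j + 1) (by omega) i
    have hpos : 1 ≤ T i (j + 2) := ((hcol _).mapsTo (hbox.1 hij)).1
    refine ⟨k, hik, ?_, hle⟩
    by_contra hk
    exact (Nat.lt_of_lt_of_le hpos hle).ne' (hzero k (j + 1) hk)

theorem ssyt_eq_columnwise (hlam : IsShape n lam) :
    SSYT n lam = columnwise (colHeight n lam) (IsStrictColumn n) RowwiseLE := by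
  have hbox {i j : ℕ} := isBox_iff_mem_Icc_colHeight (i := i) (j := j) hlam
  ext T
  constructor
  · rintro ⟨hrange, hrow, hcol, hzero⟩
    refine ⟨fun j => ⟨fun i hi => hzero i j (hbox.not.2 hi), fun i hi => hrange i j (hbox.2 hi),
      strictMonoOn_of_lt_add_one Set.ordConnected_Icc fun i _ hi hi' =>
        hcol i j (hbox.2 hi) (hbox.2 hi')⟩, fun j hj i hne => ?_⟩
    have hright : IsBox lam i (j + 1) := by
      by_contra hij
      exact hne (hzero i (j + 1) hij)
    exact hrow i j ⟨hright.1, hj, j.le_succ.trans hright.2.2⟩ hright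
  · rintro ⟨hcol, hrow⟩
    refine ⟨fun i j hij => (hcol j).mapsTo (hbox.1 hij), fun i j hij hright => ?_,
      fun i j hij hbelow => (hcol j).strictMonoOn (hbox.1 hij) (hbox.1 hbelow) i.lt_succ_self,
      fun i j hij => (hcol j).eq_zero i (hbox.not.1 hij)⟩
    exact hrow j hij.2.1 i (Nat.one_le_iff_ne_zero.1 ((hcol _).mapsTo (hbox.1 hright)).1)

end Tableaux

/-- For every partition `λ`, the number of semistandard PBW-tableaux of
shape `λ` equals the number of classical semistandard Young tableaux of shape `λ` with
entries in `{1,…,n}`. -/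
theorem card_pbw_tableaux_eq_card_ssyt (n : ℕ) (hn : 2 ≤ n)
    (lam : ℕ → ℕ) (hlam : IsShape n lam) :
    Nat.card (SSPBWTableaux n lam) = Nat.card (SSYT n lam) := by
  let profileArrays := columnwise (colHeight n lam) (IsProfile n) (fun m m' => m' ≤ m)
  have pbw_bijOn : Set.BijOn (mapColumns (colHeight n lam) tailSup)
      (columnwise (colHeight n lam) (IsPBWColumn n) PBWDominates) profileArrays :=
    bijOn_mapColumns antitoneOn_colHeight (bijOn_tailSup n)
      fun _ ht ht' => ht.pbwDominates_iff ht'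
  have ssyt_bijOn : Set.BijOn (mapColumns (colHeight n lam) (reflect n))
      (columnwise (colHeight n lam) (IsStrictColumn n) RowwiseLE) profileArrays :=
    bijOn_mapColumns antitoneOn_colHeight (bijOn_reflect n)
      fun hc hs hs' => hs.rowwiseLE_iff hs' hc
  rw [sspbwTableaux_eq_columnwise hlam, ssyt_eq_columnwise hlam]
  exact Nat.card_congr ((pbw_bijOn.equiv _).trans (ssyt_bijOn.equiv _).symm)
end

section
/- Let T be a semistandard PBW-tableau of shape λ. If j_1 < j_2 are columns such that the boxes (i,j_1) and (i,j_2) lie in Y_λ and T_{i,j_1} = T_{i,j_2} ≠ i, then T_{i,j} = T_{i,j_1} for all j with j_1 ≤ j ≤ j_2. -/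
open scoped BigOperators

/-!
Follow an entry leftwards: by semistandardness each step to the previous column can be made weakly
downwards in the diagram without decreasing the entry. Suppose that `T i j₁` strictly exceeds
everything below it in its column. A path from `(i, j)` ends weakly below `(i, j₁)`, so
`T i j ≤ T i j₁`. A path from `(i, j₂)` that has dropped below row `i` when it reaches column `j`
would end at an entry smaller than `T i j₁ = T i j₂`; hence it is still in row `i`, and
`T i j₂ ≤ T i j`.
-/

theorem IsBox.of_le {lam : ℕ → ℕ} {i j j' : ℕ} (hbox : IsBox lam i j') (hj : 1 ≤ j)
    (hjj' : j ≤ j') : IsBox lam i j :=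
  ⟨hbox.1, hj, hjj'.trans hbox.2.2⟩

/-- The semistandardness condition by itself, for a filling of the diagram of `lam` with entries in
any ordered type: each entry outside the first column is at most some entry weakly below it in the
previous column. -/
def IsLeftDominated {α : Type*} [LE α] (lam : ℕ → ℕ) (T : ℕ → ℕ → α) : Prop :=
  ∀ i j, IsBox lam i j → 2 ≤ j → ∃ k, i ≤ k ∧ IsBox lam k (j - 1) ∧ T i j ≤ T k (j - 1)

/-- The entry `T i j` is strictly greater than every entry below it in column `j`. In a PBW-tableau
this holds for the entries different from their row index. -/
def ExceedsBelow {α : Type*} [LT α] (lam : ℕ → ℕ) (T : ℕ → ℕ → α) (i j : ℕ) : Prop :=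
  ∀ k, i < k → IsBox lam k j → T k j < T i j

theorem IsPBWTableau.exceedsBelow {n : ℕ} {lam : ℕ → ℕ} {T : ℕ → ℕ → ℕ}
    (hT : IsPBWTableau n lam T) {i j : ℕ} (hbox : IsBox lam i j) (hne : T i j ≠ i) :
    ExceedsBelow lam T i j :=
  fun k hik hk ↦ hT.2.2 i k j hbox hk hik hne

namespace IsLeftDominated

variable {α : Type*} {lam : ℕ → ℕ} {T : ℕ → ℕ → α} {i j j' : ℕ}

theorem exists_le_of_le [Preorder α] (hT : IsLeftDominated lam T) (hj : 1 ≤ j) (hjj' : j ≤ j')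
    (hbox : IsBox lam i j') : ∃ k, i ≤ k ∧ IsBox lam k j ∧ T i j' ≤ T k j := by
  induction j', hjj' using Nat.le_induction generalizing i with
  | base => exact ⟨i, le_rfl, hbox, le_rfl⟩
  | succ c hjc ih =>
    obtain ⟨k, hik, hk, hTk⟩ := hT i (c + 1) hbox (by lia)
    rw [Nat.add_sub_cancel] at hk hTk
    obtain ⟨m, hkm, hm, hTm⟩ := ih hk
    exact ⟨m, hik.trans hkm, hm, hTk.trans hTm⟩

theorem lt_of_exceedsBelow [Preorder α] (hT : IsLeftDominated lam T) (hj : 1 ≤ j) (hjj' : j ≤ j')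
    (hi : ExceedsBelow lam T i j) {k : ℕ} (hik : i < k) (hbox : IsBox lam k j') :
    T k j' < T i j := by
  obtain ⟨m, hkm, hm, hTm⟩ := hT.exists_le_of_le hj hjj' hbox
  exact hTm.trans_lt (hi m (hik.trans_le hkm) hm)

theorem le_of_exceedsBelow [Preorder α] (hT : IsLeftDominated lam T) (hj : 1 ≤ j) (hjj' : j ≤ j')
    (hi : ExceedsBelow lam T i j) (hbox : IsBox lam i j') : T i j' ≤ T i j := by
  obtain ⟨m, him, hm, hTm⟩ := hT.exists_le_of_le hj hjj' hbox
  obtain rfl | him := him.eq_or_lt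
  · exact hTm
  · exact hTm.trans (hi m him hm).le

end IsLeftDominated

theorem sspbw_row_constant_general {α : Type*} [PartialOrder α] {lam : ℕ → ℕ} {T : ℕ → ℕ → α}
    (hT : IsLeftDominated lam T) {i j₁ j₂ : ℕ} (hj₁ : 1 ≤ j₁) (hbox : IsBox lam i j₂)
    (hle : T i j₁ ≤ T i j₂) (hi : ExceedsBelow lam T i j₁) {j : ℕ} (h₁ : j₁ ≤ j) (h₂ : j ≤ j₂) :
    T i j = T i j₁ := by
  have hj : 1 ≤ j := hj₁.trans h₁
  have upper : T i j ≤ T i j₁ := hT.le_of_exceedsBelow hj₁ h₁ hi (hbox.of_le hj h₂)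
  obtain ⟨k, hik, hk, hTk⟩ := hT.exists_le_of_le hj h₂ hbox
  obtain rfl | hik := hik.eq_or_lt
  · exact upper.antisymm (hle.trans hTk)
  · have drop : T k j < T i j₁ := hT.lt_of_exceedsBelow hj₁ h₁ hi hik hk
    exact absurd (hle.trans hTk) drop.not_ge

/-- In a semistandard PBW-tableau, if `T_{i,j₁} = T_{i,j₂} ≠ i` for columns
`j₁ < j₂`, then `T_{i,j} = T_{i,j₁}` for all `j₁ ≤ j ≤ j₂`. -/
theorem sspbw_row_constant (n : ℕ) (hn : 2 ≤ n) (lam : ℕ → ℕ) (hlam : IsShape n lam)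
    (T : ℕ → ℕ → ℕ) (hT : IsSSPBWTableau n lam T)
    (i j₁ j₂ : ℕ) (h12 : j₁ < j₂) (hb1 : IsBox lam i j₁) (hb2 : IsBox lam i j₂)
    (heq : T i j₁ = T i j₂) (hne : T i j₁ ≠ i) :
    ∀ j, j₁ ≤ j → j ≤ j₂ → T i j = T i j₁ :=
  fun _ ↦ sspbw_row_constant_general hT.2 hb1.2.1 hb2 heq.le (hT.1.exceedsBelow hb1 hne)
end

section
/- Let T be a semistandard PBW-tableau of shape λ. If (i_1,j_1) and (i_2,j_2) are boxes of Y_λ with i_1 ≤ i_2 and j_1 ≤ j_2, and T_{i_1,j_1} ≠ i_1 and T_{i_2,j_2} ≠ i_2, then T_{i_1,j_1} ≥ T_{i_2,j_2}; if in addition i_1 < i_2, then T_{i_1,j_1} > T_{i_2,j_2}. -/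
open scoped BigOperators

/-!
Pushing the entry of `(i₂, j₂)` left to column `j₁`, one column at a time, semistandardness yields
an entry at least as large in some row weakly below `i₂`, hence weakly below `i₁`. As the entry of
`(i₁, j₁)` differs from its row index, it dominates everything below it in its column.
-/

section

variable {n : ℕ} {lam : ℕ → ℕ} {T : ℕ → ℕ → ℕ} {i i₁ i₂ j j₁ j₂ : ℕ}

theorem IsPBWTableau.entry_lt_of_row_lt (hT : IsPBWTableau n lam T) (hb₁ : IsBox lam i₁ j)
    (hb₂ : IsBox lam i₂ j) (hi : i₁ < i₂) (hne : T i₁ j ≠ i₁) : T i₂ j < T i₁ j :=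
  hT.2.2 i₁ i₂ j hb₁ hb₂ hi hne

theorem IsPBWTableau.entry_le_of_row_le (hT : IsPBWTableau n lam T) (hb₁ : IsBox lam i₁ j)
    (hb₂ : IsBox lam i₂ j) (hi : i₁ ≤ i₂) (hne : T i₁ j ≠ i₁) : T i₂ j ≤ T i₁ j := by
  obtain rfl | hlt := hi.eq_or_lt
  · exact le_rfl
  · exact (hT.entry_lt_of_row_lt hb₁ hb₂ hlt hne).le

theorem IsSSPBWTableau.exists_entry_le_of_succ (hT : IsSSPBWTableau n lam T) (hj : 1 ≤ j)
    (hb : IsBox lam i (j + 1)) : ∃ i', i ≤ i' ∧ IsBox lam i' j ∧ T i (j + 1) ≤ T i' j :=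
  hT.2 i (j + 1) hb (Nat.succ_le_succ hj)

theorem IsSSPBWTableau.exists_entry_le_of_col_le (hT : IsSSPBWTableau n lam T) (hj₁ : 1 ≤ j₁)
    (hj : j₁ ≤ j₂) (hb : IsBox lam i j₂) :
    ∃ i', i ≤ i' ∧ IsBox lam i' j₁ ∧ T i j₂ ≤ T i' j₁ := by
  induction j₂, hj using Nat.le_induction generalizing i with
  | base => exact ⟨i, le_rfl, hb, le_rfl⟩
  | succ j hj ih =>
    obtain ⟨k, hik, hbk, hTk⟩ := hT.exists_entry_le_of_succ (hj₁.trans hj) hb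
    obtain ⟨l, hkl, hbl, hTl⟩ := ih hbk
    exact ⟨l, hik.trans hkl, hbl, hTk.trans hTl⟩

theorem sspbw_monotone_general (hT : IsSSPBWTableau n lam T) (hb₁ : IsBox lam i₁ j₁)
    (hb₂ : IsBox lam i₂ j₂) (hi : i₁ ≤ i₂) (hj : j₁ ≤ j₂) (hne : T i₁ j₁ ≠ i₁) :
    T i₂ j₂ ≤ T i₁ j₁ ∧ (i₁ < i₂ → T i₂ j₂ < T i₁ j₁) := by
  obtain ⟨k, hk, hbk, hle⟩ := hT.exists_entry_le_of_col_le hb₁.2.1 hj hb₂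
  exact ⟨hle.trans (hT.1.entry_le_of_row_le hb₁ hbk (hi.trans hk) hne),
    fun hlt => hle.trans_lt (hT.1.entry_lt_of_row_lt hb₁ hbk (hlt.trans_le hk) hne)⟩

end

/-- In a semistandard PBW-tableau, if `(i₁,j₁)` and `(i₂,j₂)` are boxes with
`i₁ ≤ i₂`, `j₁ ≤ j₂`, `T_{i₁,j₁} ≠ i₁` and `T_{i₂,j₂} ≠ i₂`, then `T_{i₁,j₁} ≥ T_{i₂,j₂}`;
if moreover `i₁ < i₂`, then `T_{i₁,j₁} > T_{i₂,j₂}`. -/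
theorem sspbw_monotone (n : ℕ) (hn : 2 ≤ n) (lam : ℕ → ℕ) (hlam : IsShape n lam)
    (T : ℕ → ℕ → ℕ) (hT : IsSSPBWTableau n lam T)
    (i₁ j₁ i₂ j₂ : ℕ) (hb1 : IsBox lam i₁ j₁) (hb2 : IsBox lam i₂ j₂)
    (hi : i₁ ≤ i₂) (hj : j₁ ≤ j₂) (hne1 : T i₁ j₁ ≠ i₁) (hne2 : T i₂ j₂ ≠ i₂) :
    T i₂ j₂ ≤ T i₁ j₁ ∧ (i₁ < i₂ → T i₂ j₂ < T i₁ j₁) :=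
  sspbw_monotone_general hT hb1 hb2 hi hj hne1
end

section
/- Let T be a semistandard PBW-tableau of shape λ and let k < l be integers such that l occurs as an entry in row k of T. Let A = A_col(k,l) be the minimal number such that T_{k,A+1} = l. Then: (i) if A ≥ 1, there exists a row index i ≥ k with the box (i,A) in Y_λ and T_{i,A} ≥ l; (ii) for every box (i,j) of Y_λ with i > k and j > A, one has T_{i,j} < l. -/
open scoped BigOperators

/-!
Semistandardness moves an entry one column to the left without decreasing it and without moving it
up; iterating, every entry is dominated by an entry of any earlier column, in the same row or below.
For (i) this is applied from column `A + 1` to column `A`. For (ii) it reduces a box in column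
`j > A` to a box in column `A + 1`, still strictly below row `k`, where the entries lie below
`T_{k,A+1}` because `T_{k,A+1} ≠ k`.
-/

section

variable {n : ℕ} {lam : ℕ → ℕ} {T : ℕ → ℕ → ℕ}

theorem IsSSPBWTableau.exists_row_ge_entry_ge (hT : IsSSPBWTableau n lam T) {i c j : ℕ}
    (hbox : IsBox lam i j) (hc : 1 ≤ c) (hcj : c ≤ j) :
    ∃ i', i ≤ i' ∧ IsBox lam i' c ∧ T i j ≤ T i' c := by
  induction j, hcj using Nat.le_induction generalizing i with
  | base => exact ⟨i, le_rfl, hbox, le_rfl⟩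
  | succ j hcj ih =>
    obtain ⟨i₁, hi₁, hbox₁, hle₁⟩ :
        ∃ i₁, i ≤ i₁ ∧ IsBox lam i₁ j ∧ T i (j + 1) ≤ T i₁ j :=
      hT.2 i (j + 1) hbox (by omega)
    obtain ⟨i₂, hi₂, hbox₂, hle₂⟩ := ih hbox₁
    exact ⟨i₂, hi₁.trans hi₂, hbox₂, hle₁.trans hle₂⟩

theorem IsSSPBWTableau.entry_lt_of_row_lt_of_col_le (hT : IsSSPBWTableau n lam T)
    {k c i j : ℕ} (hkc : IsBox lam k c) (hne : T k c ≠ k)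
    (hij : IsBox lam i j) (hki : k < i) (hcj : c ≤ j) : T i j < T k c := by
  obtain ⟨i', hii', hbox, hle⟩ := hT.exists_row_ge_entry_ge hij hkc.2.1 hcj
  obtain ⟨⟨_, _, column_lt⟩, _⟩ := hT
  exact hle.trans_lt (column_lt k i' c hkc hbox (hki.trans_le hii') hne)

theorem sspbw_Acol_general (hT : IsSSPBWTableau n lam T) {k A : ℕ}
    (hbox : IsBox lam k (A + 1)) (hne : T k (A + 1) ≠ k) :
    (1 ≤ A → ∃ i, k ≤ i ∧ IsBox lam i A ∧ T k (A + 1) ≤ T i A) ∧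
    (∀ i j, IsBox lam i j → k < i → A < j → T i j < T k (A + 1)) :=
  ⟨fun hA => hT.exists_row_ge_entry_ge hbox hA A.le_succ,
    fun _ _ hij hki hAj => hT.entry_lt_of_row_lt_of_col_le hbox hne hij hki hAj⟩

end

/-- Let `T` be a semistandard PBW-tableau, `k < l`, and suppose `l` occurs
in row `k`, with `A = A_col(k,l)` minimal such that `T_{k,A+1} = l`. Then (i) if `A ≥ 1`
there is a row `i ≥ k` with `T_{i,A} ≥ l`, and (ii) `T_{i,j} < l` for every box `(i,j)` with
`i > k` and `j > A`. -/
theorem sspbw_Acol (n : ℕ) (hn : 2 ≤ n) (lam : ℕ → ℕ) (hlam : IsShape n lam)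
    (T : ℕ → ℕ → ℕ) (hT : IsSSPBWTableau n lam T)
    (k l A : ℕ) (hkl : k < l)
    (hbox : IsBox lam k (A + 1)) (hval : T k (A + 1) = l)
    (hmin : ∀ j, 1 ≤ j → j ≤ A → T k j ≠ l) :
    (1 ≤ A → ∃ i, k ≤ i ∧ IsBox lam i A ∧ l ≤ T i A) ∧
    (∀ i j, IsBox lam i j → k < i → A < j → T i j < l) := by
  subst hval
  exact sspbw_Acol_general hT hbox hkl.ne'
end

section
/- Let p ≥ q with p, q ∈ {d_1,…,d_s}, let 1 ≤ k ≤ q, and let L = (l_1,…,l_p) and J = (j_1,…,j_q) be tuples of distinct elements of {1,…,n} such that {j_1,…,j_k} ∩ {q+1,…,p} = ∅. For 1 ≤ r_1 < … < r_k ≤ p let (L',J') be obtained from (L,J) by exchanging the entries (l_{r_1},…,l_{r_k}) with (j_1,…,j_k). If the entries of L' are pairwise distinct and the entries of J' are pairwise distinct, then deg L' + deg J' = deg L + deg J + #{i : q+1 ≤ l_{r_i} ≤ p}; in particular, the degenerate Plücker relation R^{k;a}_{L,J} consists precisely of the terms of the classical Plücker relation R^k_{L,J} whose total PBW degree is minimal.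 -/
open scoped BigOperators

/-- Exchange in `L` the entries at the positions in `S` (`S = {r_1 < … < r_k}`) with the
first `S.card` entries of `J`; returns the new pair `(L', J')` where
`J' = (l_{r_1},…,l_{r_k}, j_{k+1},…,j_q)`. -/
def exch (L J : List ℕ) (S : Finset (Fin L.length)) : List ℕ × List ℕ :=
  ((List.finRange L.length).map
      (fun i => if i ∈ S then J.getD (S.filter (· < i)).card 0 else L.get i),
   (S.sort (· ≤ ·)).map L.get ++ J.drop S.card)

/-- `(k, L, J)` is a valid datum for a (degenerate) Plücker relation: `|L| = p ≥ q = |J|`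
with `p, q ∈ {d_1,…,d_s}`, `1 ≤ k ≤ q` and all entries in `{1,…,n}`. -/
def ValidRel (n : ℕ) (D : Finset ℕ) (k : ℕ) (L J : List ℕ) : Prop :=
  L.length ∈ D ∧ J.length ∈ D ∧ J.length ≤ L.length ∧ 1 ≤ k ∧ k ≤ J.length ∧
  (∀ x ∈ L, x ∈ Finset.Icc 1 n) ∧ (∀ x ∈ J, x ∈ Finset.Icc 1 n)

/-- PBW degree of a list: the number of entries exceeding the length of the list. -/
def ldeg (l : List ℕ) : ℕ := (l.filter (fun x => decide (l.length < x))).length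

/-!
The PBW degree depends only on the length of a tuple and on the multiset of its entries. As
multisets, the exchange swaps the entries `A` of `L` at the positions in `S` with the first `|S|`
entries `B` of `J` and fixes the rest, and it preserves both lengths `p` and `q`. Moving an entry
`x` from `L` to `J` changes its contribution to the total degree from `[p < x]` to `[q < x]`, i.e.
raises it by `[q < x ≤ p]`; moving it from `J` to `L` lowers it by the same amount. So the total
degree grows by the number of entries in `(q, p]` of `A` minus that of `B`, and the latter vanishes.
-/

theorem map_card_filter_lt_val {α : Type*} [LinearOrder α] (S : Finset α) :
    S.val.map (fun i => (S.filter (· < i)).card) = Multiset.range S.card := by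
  induction S using Finset.induction_on_max with
  | empty => simp
  | insert a S hlt ih =>
    have ha : a ∉ S := fun h => lt_irrefl a (hlt a h)
    have hrank_max : ((insert a S).filter (· < a)).card = S.card := by
      rw [Finset.filter_insert, if_neg (lt_irrefl a), Finset.filter_true_of_mem hlt]
    have hrank : ∀ i ∈ S.val, ((insert a S).filter (· < i)).card = (S.filter (· < i)).card :=
      fun i hi => by rw [Finset.filter_insert, if_neg (hlt i hi).not_gt]
    rw [Finset.insert_val_of_notMem ha, Multiset.map_cons, hrank_max, Multiset.map_congr rfl hrank,
      ih, Finset.card_insert_of_notMem ha, Multiset.range_succ]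

theorem val_add_val_compl {α : Type*} [Fintype α] [DecidableEq α] (S : Finset α) :
    S.val + Sᶜ.val = Finset.univ.val := by
  rw [← Finset.disjUnion_val S Sᶜ disjoint_compl_right, Finset.disjUnion_eq_union,
    Finset.union_compl]

theorem map_ite_mem_univ_val {α β : Type*} [Fintype α] [DecidableEq α] (S : Finset α)
    (f g : α → β) :
    Finset.univ.val.map (fun i => if i ∈ S then f i else g i) =
      S.val.map f + Sᶜ.val.map g := by
  rw [← val_add_val_compl S, Multiset.map_add]
  congr 1
  · exact Multiset.map_congr rfl fun i hi => if_pos hi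
  · exact Multiset.map_congr rfl fun i hi => if_neg (Finset.mem_compl.mp hi)

section Lists

variable {α : Type*}

theorem map_getD_range_eq_take (l : List α) (d : α) {k : ℕ} (hk : k ≤ l.length) :
    (List.range k).map (l.getD · d) = l.take k := by
  refine List.ext_getElem (by simpa using hk) fun i hi _ => ?_
  have hik : i < k := by simpa using hi
  rw [List.getElem_map, List.getElem_range, List.getD_eq_getElem l d (hik.trans_le hk),
    List.getElem_take]

theorem coe_eq_map_get_add_map_get_compl (l : List α) (S : Finset (Fin l.length)) :
    (l : Multiset α) = S.val.map l.get + Sᶜ.val.map l.get := by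
  rw [← Multiset.map_add, val_add_val_compl, Fin.univ_val_map, List.ofFn_get]

end Lists

theorem coe_exch_fst (L J : List ℕ) (S : Finset (Fin L.length)) (hS : S.card ≤ J.length) :
    ((exch L J S).1 : Multiset ℕ) = (J.take S.card : Multiset ℕ) + Sᶜ.val.map L.get := by
  have hexchanged : S.val.map (fun i => J.getD (S.filter (· < i)).card 0) = J.take S.card := by
    rw [← map_getD_range_eq_take J 0 hS, ← Multiset.map_coe, Multiset.coe_range,
      ← map_card_filter_lt_val S, Multiset.map_map]
    rfl
  rw [← hexchanged, ← map_ite_mem_univ_val, Fin.univ_val_map, List.ofFn_eq_map, exch]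

theorem coe_exch_snd (L J : List ℕ) (S : Finset (Fin L.length)) :
    ((exch L J S).2 : Multiset ℕ) = S.val.map L.get + (J.drop S.card : Multiset ℕ) := by
  rw [exch, ← Multiset.coe_add, ← Multiset.map_coe, Finset.sort_eq]

theorem length_exch_fst (L J : List ℕ) (S : Finset (Fin L.length)) :
    (exch L J S).1.length = L.length := by
  simp [exch]

theorem length_exch_snd (L J : List ℕ) (S : Finset (Fin L.length)) (hS : S.card ≤ J.length) :
    (exch L J S).2.length = J.length := by
  simp [exch, hS]

theorem ldeg_eq_countP_coe (l : List ℕ) :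
    ldeg l = (l : Multiset ℕ).countP (l.length < ·) := by
  rw [ldeg, Multiset.coe_countP, List.countP_eq_length_filter]

theorem countP_lt_eq_add_countP_Ioc {α : Type*} [LinearOrder α] {a b : α} (hab : a ≤ b)
    (s : Multiset α) :
    s.countP (a < ·) = s.countP (b < ·) + s.countP (· ∈ Set.Ioc a b) := by
  induction s using Multiset.induction_on with
  | empty => simp
  | cons x s ih =>
    simp only [Multiset.countP_cons, ih, Set.mem_Ioc]
    grind

theorem ldeg_exch_add_countP_take (L J : List ℕ) (S : Finset (Fin L.length))
    (hS : S.card ≤ J.length) (hJL : J.length ≤ L.length) :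
    ldeg (exch L J S).1 + ldeg (exch L J S).2 +
        (J.take S.card : Multiset ℕ).countP (· ∈ Set.Ioc J.length L.length) =
      ldeg L + ldeg J + (S.val.map L.get).countP (· ∈ Set.Ioc J.length L.length) := by
  have hL := coe_eq_map_get_add_map_get_compl L S
  have hJ : (J : Multiset ℕ) = (J.take S.card : Multiset ℕ) + (J.drop S.card : Multiset ℕ) := by
    rw [Multiset.coe_add, List.take_append_drop]
  have htake := countP_lt_eq_add_countP_Ioc hJL (J.take S.card : Multiset ℕ)
  have hget := countP_lt_eq_add_countP_Ioc hJL (S.val.map L.get)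
  simp only [ldeg_eq_countP_coe, length_exch_fst, length_exch_snd L J S hS, coe_exch_fst L J S hS,
    coe_exch_snd]
  rw [congrArg (Multiset.countP (L.length < ·)) hL, congrArg (Multiset.countP (J.length < ·)) hJ]
  simp only [Multiset.countP_add]
  omega

theorem exch_pbw_degree_general (L J : List ℕ) (S : Finset (Fin L.length))
    (hS : S.card ≤ J.length) (hJL : J.length ≤ L.length)
    (hJ : ∀ x ∈ J.take S.card, ¬ (J.length + 1 ≤ x ∧ x ≤ L.length)) :
    ldeg (exch L J S).1 + ldeg (exch L J S).2 =
      ldeg L + ldeg J +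
        (S.filter (fun i => J.length + 1 ≤ L.get i ∧ L.get i ≤ L.length)).card ∧
    ((∀ i ∈ S, ¬ (J.length + 1 ≤ L.get i ∧ L.get i ≤ L.length)) ↔
      ldeg (exch L J S).1 + ldeg (exch L J S).2 = ldeg L + ldeg J) := by
  have hdeg : ldeg (exch L J S).1 + ldeg (exch L J S).2 = ldeg L + ldeg J +
      (S.filter (fun i => J.length + 1 ≤ L.get i ∧ L.get i ≤ L.length)).card := by
    have hbalance := ldeg_exch_add_countP_take L J S hS hJL
    rwa [Multiset.countP_eq_zero.mpr hJ, add_zero, Multiset.countP_map] at hbalance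
  refine ⟨hdeg, ?_⟩
  rw [hdeg, Nat.add_eq_left, Finset.card_eq_zero, Finset.filter_eq_empty_iff]

/-- Exchanging the entries of `L` at positions `S` with the first `k`
entries of `J` (which avoid `{q+1,…,p}`) raises the total PBW degree by
`#{i ∈ S : q+1 ≤ l_i ≤ p}`; in particular the terms kept in `R^{k;a}_{L,J}` are exactly the
terms of `R^k_{L,J}` of minimal total PBW degree. -/
theorem exch_pbw_degree (n : ℕ) (hn : 2 ≤ n)
    (D : Finset ℕ) (hDne : D.Nonempty) (hD : ∀ d ∈ D, 1 ≤ d ∧ d ≤ n - 1)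
    (k : ℕ) (L J : List ℕ) (hvalid : ValidRel n D k L J)
    (hLnd : L.Nodup) (hJnd : J.Nodup)
    (hjk : ∀ m, m < k → ¬ (J.length + 1 ≤ J.getD m 0 ∧ J.getD m 0 ≤ L.length))
    (S : Finset (Fin L.length)) (hS : S.card = k)
    (hL' : (exch L J S).1.Nodup) (hJ' : (exch L J S).2.Nodup) :
    ldeg (exch L J S).1 + ldeg (exch L J S).2 =
      ldeg L + ldeg J +
        (S.filter (fun i => J.length + 1 ≤ L.get i ∧ L.get i ≤ L.length)).card ∧
    ((∀ i ∈ S, ¬ (J.length + 1 ≤ L.get i ∧ L.get i ≤ L.length)) ↔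
      ldeg (exch L J S).1 + ldeg (exch L J S).2 = ldeg L + ldeg J) := by
  obtain ⟨-, -, hJL, -, hk, -, -⟩ := hvalid
  exact exch_pbw_degree_general L J S (hS ▸ hk) hJL
    (by simpa [hS, ← map_getD_range_eq_take J 0 hk] using hjk)
end
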